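/- arXiv:2601.16614 — 2 statements merged into one kernel-verified Lean document; each statement's English description precedes it below -/
import Mathlib

section
/- Let Γ^div be a diversified normal-form instance and let (G̃_Γ, λ_Γ, S_Γ) be its labelled dependency graph. Then for every n ≥ 1, S_n(Γ^div) = W_n(G̃_Γ, λ_Γ, S_Γ). -/
/-!
Both sides are maxima of cardinalities of sets of maps `V → Fin n`, so it suffices to compare
achievable sets.

Every code is a set of winning configurations: let the vertex of an equation `f(x_{i_1},…) = x_j`
guess by applying the interpretation of `f` (`exists_strategy`).

The converse has one obstacle: a diversified instance may share a constant symbol between several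
equations, whereas the corresponding equation vertices guess independent constants. Fix a winning
configuration `a₀` and, at each label `x`, apply to the alphabet the transposition of `a₀ x` and a fixed letter `z`.
This is injective on configurations. A vertex without in-neighbours forces its label to the same
value in all winning configurations, namely the value under `a₀`, which becomes `z`. After
this relabelling all constant equations ask for the single value `z`, and non-constant equations do
not share symbols, so the winning configurations determine consistent partial functions
(`exists_interp_of_consistent`) that extend to an interpretation solving every equation.
-/

namespace TC

/-- An interpretation of a signature (function symbols `F` with arities `ar`) on an
alphabet `A`. -/
abbrev Interp (F : Type) (ar : F → ℕ) (A : Type) : Type :=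
  (f : F) → (Fin (ar f) → A) → A

end TC

namespace NF

/-- A normal-form Term Coding instance: a finite list of equations
`f(x_{i_1},…,x_{i_r}) = x_j`, each recorded as a triple (symbol, argument tuple,
right-hand-side variable).  Constant equations are the case `ar f = 0`. -/
structure Inst (F : Type) (ar : F → ℕ) (V : Type) : Type where
  eqs : List ((f : F) × ((Fin (ar f) → V) × V))

variable {F : Type} {ar : F → ℕ} {V : Type}

/-- The solution set of an interpretation. -/
def sols {A : Type} (Γ : Inst F ar V) (I : TC.Interp F ar A) : Set (V → A) :=
  {a | ∀ e ∈ Γ.eqs, I e.1 (fun i => a (e.2.1 i)) = a e.2.2}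

/-- The maximum code size `S_n(Γ)` over interpretations on an `n`-element alphabet. -/
noncomputable def Sn (Γ : Inst F ar V) (n : ℕ) : ℕ :=
  sSup {m | ∃ I : TC.Interp F ar (Fin n), m = (sols Γ I).ncard}

/-- Term-DAG / no-collision property: distinct equations using the same symbol have
distinct ordered argument tuples (constants occur in at most one equation). -/
def NoCollision (Γ : Inst F ar V) : Prop :=
  ∀ (f : F) (args : Fin (ar f) → V) (j j' : V),
    (⟨f, (args, j)⟩ : (f : F) × ((Fin (ar f) → V) × V)) ∈ Γ.eqs →
    (⟨f, (args, j')⟩ : (f : F) × ((Fin (ar f) → V) × V)) ∈ Γ.eqs → j = j'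

/-- Functional normal form: every defined variable is the right-hand side of exactly one
equation. -/
def FNF (Γ : Inst F ar V) : Prop :=
  ∀ e ∈ Γ.eqs, ∀ e' ∈ Γ.eqs, e.2.2 = e'.2.2 → e = e'

/-- Diversified: the function symbol of each non-constant equation occurs in no other
equation (constant symbols may be shared). -/
def Diversified (Γ : Inst F ar V) : Prop :=
  ∀ e ∈ Γ.eqs, ∀ e' ∈ Γ.eqs, 0 < ar e.1 → e.1 = e'.1 → e = e'

/-- Source variables: those not defined by any equation. -/
def Src (Γ : Inst F ar V) : Set V := {x | ∀ e ∈ Γ.eqs, e.2.2 ≠ x}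

/-- The dependency digraph: an edge `u → v` whenever `u` occurs as an argument of an
equation whose right-hand side is `v`. -/
def DepE (Γ : Inst F ar V) : V → V → Prop :=
  fun u v => ∃ e ∈ Γ.eqs, (∃ i, e.2.1 i = u) ∧ e.2.2 = v

/-- Arities of the diversified signature: one fresh symbol per equation. -/
abbrev divAr (Γ : Inst F ar V) : Fin Γ.eqs.length → ℕ :=
  fun ℓ => ar (Γ.eqs.get ℓ).1

/-- The diversification of a normal-form instance: replace the symbol occurring in the
`ℓ`-th equation by a fresh symbol used only in that equation. -/
def div (Γ : Inst F ar V) : Inst (Fin Γ.eqs.length) (divAr Γ) V where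
  eqs := (List.finRange Γ.eqs.length).map
    fun ℓ => ⟨ℓ, ((Γ.eqs.get ℓ).2.1, (Γ.eqs.get ℓ).2.2)⟩

/-- The labelled dependency graph: one (source) variable vertex per variable and one
equation vertex per equation, with edges from the argument variables of each equation to
its equation vertex. -/
def LDepE (Γ : Inst F ar V) :
    (V ⊕ Fin Γ.eqs.length) → (V ⊕ Fin Γ.eqs.length) → Prop :=
  fun u v =>
    match u, v with
    | Sum.inl x, Sum.inr ℓ => ∃ i, (Γ.eqs.get ℓ).2.1 i = x
    | _, _ => False

/-- The labelling of the labelled dependency graph: a variable vertex is labelled by its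
variable, an equation vertex by the right-hand-side variable of its equation. -/
def lamΓ (Γ : Inst F ar V) : (V ⊕ Fin Γ.eqs.length) → V :=
  Sum.elim id fun ℓ => (Γ.eqs.get ℓ).2.2

/-- The source vertices of the labelled dependency graph: the variable vertices. -/
def LSrc (Γ : Inst F ar V) : Set (V ⊕ Fin Γ.eqs.length) := Set.range Sum.inl

end NF

namespace GG

variable {V X : Type}

/-- A configuration is winning for a strategy `g` on the digraph with edge relation `E`
and source set `S` if every non-source vertex correctly guesses its own value from the
values of its in-neighbours. -/
def IsWinning (E : V → V → Prop) (S : Set V) {A : Type}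
    (g : ∀ v : V, ({u : V // E u v} → A) → A) (a : V → A) : Prop :=
  ∀ v ∉ S, a v = g v fun u => a u.1

/-- `W_n(G,S)`: the maximum number of winning configurations over all strategies, on an
alphabet of size `n`. -/
noncomputable def W (E : V → V → Prop) (S : Set V) (n : ℕ) : ℕ :=
  sSup {m | ∃ g : ∀ v : V, ({u : V // E u v} → Fin n) → Fin n,
    m = {a : V → Fin n | IsWinning E S g a}.ncard}

/-- Winning configurations of the labelled guessing game: configurations assign values to
labels, and every non-source vertex must guess the value of its label. -/
def IsWinningL (E : V → V → Prop) (lam : V → X) (S : Set V) {A : Type}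
    (g : ∀ v : V, ({u : V // E u v} → A) → A) (a : X → A) : Prop :=
  ∀ v ∉ S, a (lam v) = g v fun u => a (lam u.1)

/-- `W_n(G,λ,S)`: the maximum number of winning configurations of the labelled guessing
game over all strategies, on an alphabet of size `n`. -/
noncomputable def Wl (E : V → V → Prop) (lam : V → X) (S : Set V) (n : ℕ) : ℕ :=
  sSup {m | ∃ g : ∀ v : V, ({u : V // E u v} → Fin n) → Fin n,
    m = {a : X → Fin n | IsWinningL E lam S g a}.ncard}

/-- The guessing number `gn(G,S) = sup_{n ≥ 2} log_n W_n(G,S)`. -/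
noncomputable def gn (E : V → V → Prop) (S : Set V) : ℝ :=
  sSup {x : ℝ | ∃ n : ℕ, 2 ≤ n ∧ x = Real.logb n (W E S n)}

/-- The labelled guessing number `gn(G,λ,S) = sup_{n ≥ 2} log_n W_n(G,λ,S)`. -/
noncomputable def gnL (E : V → V → Prop) (lam : V → X) (S : Set V) : ℝ :=
  sSup {x : ℝ | ∃ n : ℕ, 2 ≤ n ∧ x = Real.logb n (Wl E lam S n)}

end GG

namespace NF

variable {F : Type} {ar : F → ℕ} {V : Type}

theorem exists_strategy {A : Type} (Γ : Inst F ar V) (I : TC.Interp F ar A) [Nonempty A] :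
    ∃ g : ∀ v : V ⊕ Fin Γ.eqs.length, ({u // LDepE Γ u v} → A) → A,
      {a : V → A | GG.IsWinningL (LDepE Γ) (lamΓ Γ) (LSrc Γ) g a} = sols Γ I := by
  refine ⟨fun v => match v with
    | Sum.inl _ => fun _ => Classical.arbitrary A
    | Sum.inr ℓ => fun t => I (Γ.eqs.get ℓ).1 fun i => t ⟨Sum.inl ((Γ.eqs.get ℓ).2.1 i), i, rfl⟩,
    ?_⟩
  ext a
  constructor
  · intro h e he
    obtain ⟨ℓ, rfl⟩ := List.get_of_mem he
    exact (h (Sum.inr ℓ) (by simp [LSrc])).symm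
  · intro h v hv
    rcases v with x | ℓ
    · exact absurd ⟨x, rfl⟩ hv
    · exact (h _ (List.get_mem Γ.eqs ℓ)).symm

/-- A set `T` of configurations lies in a common code as soon as the partial functions it prescribes
for the symbols are single-valued. -/
theorem exists_interp_of_consistent {A : Type} [Nonempty A] (Γ : Inst F ar V) (T : Set (V → A))
    (hT : ∀ (f : F) (p q : (Fin (ar f) → V) × V),
      (⟨f, p⟩ : (f : F) × ((Fin (ar f) → V) × V)) ∈ Γ.eqs →
      (⟨f, q⟩ : (f : F) × ((Fin (ar f) → V) × V)) ∈ Γ.eqs →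
      ∀ b ∈ T, ∀ c ∈ T, (∀ i, b (p.1 i) = c (q.1 i)) → b p.2 = c q.2) :
    ∃ I : TC.Interp F ar A, T ⊆ sols Γ I := by
  have key : ∀ (f : F) (t : Fin (ar f) → A), ∃ y : A, ∀ p : (Fin (ar f) → V) × V,
      (⟨f, p⟩ : (f : F) × ((Fin (ar f) → V) × V)) ∈ Γ.eqs →
      ∀ b ∈ T, (∀ i, b (p.1 i) = t i) → y = b p.2 := by
    intro f t
    by_cases h : ∃ p : (Fin (ar f) → V) × V,
      (⟨f, p⟩ : (f : F) × ((Fin (ar f) → V) × V)) ∈ Γ.eqs ∧ ∃ b ∈ T, ∀ i, b (p.1 i) = t i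
    · obtain ⟨p, hp, b, hb, hbt⟩ := h
      exact ⟨b p.2, fun q hq c hc hct =>
        hT f p q hp hq b hb c hc fun i => (hbt i).trans (hct i).symm⟩
    · exact ⟨Classical.arbitrary A, fun p hp b hb hbt => absurd ⟨p, hp, b, hb, hbt⟩ h⟩
  choose I hI using key
  exact ⟨I, fun b hb e he => hI e.1 _ e.2 he b hb fun _ => rfl⟩

/-- Configurations winning for the same strategy that agree on the arguments of an equation agree
on its right-hand side. -/
theorem rhs_eq_of_args_eq {A : Type} (Γ : Inst F ar V)
    (g : ∀ v : V ⊕ Fin Γ.eqs.length, ({u // LDepE Γ u v} → A) → A) {a b : V → A}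
    (ha : GG.IsWinningL (LDepE Γ) (lamΓ Γ) (LSrc Γ) g a)
    (hb : GG.IsWinningL (LDepE Γ) (lamΓ Γ) (LSrc Γ) g b)
    {e : (f : F) × ((Fin (ar f) → V) × V)} (he : e ∈ Γ.eqs)
    (h : ∀ i, a (e.2.1 i) = b (e.2.1 i)) : a e.2.2 = b e.2.2 := by
  obtain ⟨ℓ, rfl⟩ := List.get_of_mem he
  have h1 := ha (Sum.inr ℓ) (by simp [LSrc])
  have h2 := hb (Sum.inr ℓ) (by simp [LSrc])
  refine h1.trans (Eq.trans ?_ h2.symm)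
  congr 1
  funext ⟨u, hu⟩
  rcases u with x | k
  · obtain ⟨i, rfl⟩ := hu
    exact h i
  · exact hu.elim

theorem exists_interp {A : Type} [Finite A] [Finite V] [Nonempty A] (Γ : Inst F ar V)
    (hdiv : Diversified Γ) (g : ∀ v : V ⊕ Fin Γ.eqs.length, ({u // LDepE Γ u v} → A) → A) :
    ∃ I : TC.Interp F ar A,
      {a : V → A | GG.IsWinningL (LDepE Γ) (lamΓ Γ) (LSrc Γ) g a}.ncard ≤ (sols Γ I).ncard := by
  classical
  set S := {a : V → A | GG.IsWinningL (LDepE Γ) (lamΓ Γ) (LSrc Γ) g a} with hS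
  rcases S.eq_empty_or_nonempty with h0 | ⟨a₀, ha₀⟩
  · exact ⟨fun _ _ => Classical.arbitrary A, by simp [h0]⟩
  let z : A := Classical.arbitrary A
  let φ : (V → A) → (V → A) := fun a x => Equiv.swap (a₀ x) z (a x)
  have hφ : Function.Injective φ := fun a b hab =>
    funext fun x => (Equiv.swap (a₀ x) z).injective (congrFun hab x)
  obtain ⟨I, hI⟩ := exists_interp_of_consistent Γ (φ '' S) (by
    rintro f p q hp hq _ ⟨a, ha, rfl⟩ _ ⟨b, hb, rfl⟩ h
    rcases Nat.eq_zero_or_pos (ar f) with har | har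
    · -- With no arguments, every winning configuration agrees with `a₀` on the right-hand side.
      have hz : ∀ r : (Fin (ar f) → V) × V,
          (⟨f, r⟩ : (f : F) × ((Fin (ar f) → V) × V)) ∈ Γ.eqs → ∀ c ∈ S, φ c r.2 = z := by
        intro r hr c hc
        have : c r.2 = a₀ r.2 := rhs_eq_of_args_eq Γ g hc ha₀ hr
          fun i => (Fin.cast har i).elim0
        simp [φ, this]
      rw [hz p hp a ha, hz q hq b hb]
    · have hpq : p = q := by simpa using hdiv _ hp _ hq har rfl
      subst hpq
      have : a p.2 = b p.2 := rhs_eq_of_args_eq Γ g ha hb hp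
        fun i => (Equiv.swap (a₀ (p.1 i)) z).injective (h i)
      simp [φ, this])
  exact ⟨I, by
    rw [← Set.ncard_image_of_injective S hφ]
    exact Set.ncard_le_ncard hI (Set.toFinite _)⟩

end NF

/-- **Diversified instances are labelled guessing games.** Let `Γdiv` be a
diversified normal-form instance and let `(G̃_Γ, λ_Γ, S_Γ)` be its labelled dependency
graph.  Then for every `n ≥ 1`, `S_n(Γdiv) = W_n(G̃_Γ, λ_Γ, S_Γ)`. -/
theorem diversified_is_labelled_guessing_game {F : Type} {ar : F → ℕ} {V : Type}
    [Fintype V] (Γ : NF.Inst F ar V) (hdiv : NF.Diversified Γ) (n : ℕ) (hn : 1 ≤ n) :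
    NF.Sn Γ n = GG.Wl (NF.LDepE Γ) (NF.lamΓ Γ) (NF.LSrc Γ) n := by
  have : Nonempty (Fin n) := ⟨⟨0, hn⟩⟩
  -- Both suprema are over bounded sets of naturals, hence are not junk values.
  have bound : ∀ T : Set (V → Fin n), T.ncard ≤ Nat.card (V → Fin n) := fun T => by
    rw [← Set.ncard_univ]
    exact Set.ncard_le_ncard (Set.subset_univ _) (Set.toFinite _)
  unfold NF.Sn GG.Wl
  apply le_antisymm
  · apply csSup_le'
    rintro _ ⟨I, rfl⟩
    obtain ⟨g, hg⟩ := NF.exists_strategy Γ I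
    refine le_csSup ⟨Nat.card (V → Fin n), ?_⟩ ⟨g, by rw [hg]⟩
    rintro _ ⟨_, rfl⟩
    exact bound _
  · apply csSup_le'
    rintro _ ⟨g, rfl⟩
    obtain ⟨I, hI⟩ := NF.exists_interp Γ hdiv g
    refine hI.trans (le_csSup ⟨Nat.card (V → Fin n), ?_⟩ ⟨I, rfl⟩)
    rintro _ ⟨_, rfl⟩
    exact bound _
end

section
/- Guessing-number sandwich theorem (unlabelled functional form): let Γ be a Term Coding instance, let Γ^nf be a normal-form instance with the Term-DAG/no-collision property equivalent to Γ (i.e. S_n(Γ^nf) = S_n(Γ) for all n), assume Γ^nf is in functional normal form, let k be the number of variables of Γ^nf, let G_Γ be its dependency digraph, and let S = Src(Γ^nf). Then for every n ≥ k, W_{⌊n/k⌋}(G_Γ, S) ≤ S_n(Γ) ≤ W_n(G_Γ, S). -/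
/-!
Both inequalities are obtained by transporting single strategies and interpretations.

Upper bound (`exists_strategy`): an interpretation `I` yields the strategy in which each defined
variable guesses the value that `I` computes from the arguments of a defining equation; all these
arguments are in-neighbours, and every solution is a winning configuration.

Lower bound (`exists_interp`): with `k` variables and `m = ⌊n/k⌋`, the alphabet of size `n`
contains a copy of `V' × Fin m`, so a letter can carry the name of a variable next to its value.
Given a strategy `g` over `Fin m`, a symbol `f` reads the names in its argument tuple. By the
no-collision property they identify the equation in use, and by functional normal form the
arguments of this equation are exactly the in-neighbours of its right-hand side `j`, so the
value `g j` can be computed and returned, tagged with the name `j`. Tagging embeds the winning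
configurations of `g` into the solutions of this interpretation.
-/

namespace TC

/-- Terms over a signature given by a type `F` of function symbols with arities `ar`
(0-ary symbols are constants), with variables from `V`. -/
inductive Term (F : Type) (ar : F → ℕ) (V : Type) : Type where
  | var : V → Term F ar V
  | app : (f : F) → (Fin (ar f) → Term F ar V) → Term F ar V

variable {F : Type} {ar : F → ℕ} {V : Type}

/-- Evaluation of a term under an interpretation and an assignment of the variables. -/
def Term.eval {A : Type} (I : Interp F ar A) (a : V → A) : Term F ar V → A
  | .var v => a v
  | .app f ts => I f fun i => (ts i).eval I a

/-- A Term Coding instance: a finite list of equations between terms. -/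
structure Instance (F : Type) (ar : F → ℕ) (V : Type) : Type where
  eqs : List (Term F ar V × Term F ar V)

/-- The code (solution set) of an interpretation: the set of assignments satisfying
every equation of the instance. -/
def sols {A : Type} (Γ : Instance F ar V) (I : Interp F ar A) : Set (V → A) :=
  {a | ∀ e ∈ Γ.eqs, e.1.eval I a = e.2.eval I a}

/-- The maximum code size `S_n(Γ)` over all interpretations on an `n`-element alphabet. -/
noncomputable def Sn (Γ : Instance F ar V) (n : ℕ) : ℕ :=
  sSup {m | ∃ I : Interp F ar (Fin n), m = (sols Γ I).ncard}

/-- An equation is in normal form if it has the shape `f(x_{i_1},…,x_{i_k}) = x_j`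
(constants are the case `ar f = 0`). -/
def IsNormalEq (e : Term F ar V × Term F ar V) : Prop :=
  ∃ (f : F) (args : Fin (ar f) → V) (j : V),
    e = (Term.app f fun i => Term.var (args i), Term.var j)

/-- An instance is in normal form if every equation is. -/
def IsNormalForm (Γ : Instance F ar V) : Prop := ∀ e ∈ Γ.eqs, IsNormalEq e

/-- Term-DAG / no-collision property: distinct equations using the same function symbol
have distinct ordered argument tuples (for constants: at most one constant equation). -/
def NoCollision (Γ : Instance F ar V) : Prop :=
  ∀ (f : F) (args : Fin (ar f) → V) (j j' : V),
    ((Term.app f fun i => Term.var (args i), Term.var j) ∈ Γ.eqs) →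
    ((Term.app f fun i => Term.var (args i), Term.var j') ∈ Γ.eqs) → j = j'

/-- Renaming the variables of a term. -/
def Term.rename {W : Type} (g : V → W) : Term F ar V → Term F ar W
  | .var v => .var (g v)
  | .app f ts => .app f fun i => (ts i).rename g

end TC

section Helpers

variable {F : Type} {ar : F → ℕ} {V : Type}

theorem exists_strategy (Γ : NF.Inst F ar V) {A : Type} [Nonempty A] (I : TC.Interp F ar A) :
    ∃ g : ∀ v : V, ({u : V // NF.DepE Γ u v} → A) → A,
      NF.sols Γ I ⊆ {a | GG.IsWinning (NF.DepE Γ) (NF.Src Γ) g a} := by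
  have key : ∀ v : V, ∃ gv : ({u : V // NF.DepE Γ u v} → A) → A,
      ∀ a ∈ NF.sols Γ I, v ∉ NF.Src Γ → a v = gv fun u => a u.1 := by
    intro v
    by_cases hv : ∃ e ∈ Γ.eqs, e.2.2 = v
    · obtain ⟨e, he, rfl⟩ := hv
      exact ⟨fun h => I e.1 fun i => h ⟨e.2.1 i, e, he, ⟨i, rfl⟩, rfl⟩,
        fun a ha _ => (ha e he).symm⟩
    · exact ⟨fun _ => Classical.arbitrary A,
        fun a _ hs => absurd (fun e he h => hv ⟨e, he, h⟩) hs⟩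
  choose g hg using key
  exact ⟨g, fun a ha v hv => hg v a ha hv⟩

/-- The interpretation reads letters of `B` as pairs (variable, value) through the embedding `φ`;
every winning configuration becomes a solution once each value is tagged with its variable. -/
theorem exists_interp (Γ : NF.Inst F ar V) (hnc : NF.NoCollision Γ) (hfnf : NF.FNF Γ)
    {A B : Type} [Nonempty B] (φ : V × A ↪ B)
    (g : ∀ v : V, ({u : V // NF.DepE Γ u v} → A) → A) :
    ∃ I : TC.Interp F ar B, ∀ a, GG.IsWinning (NF.DepE Γ) (NF.Src Γ) g a →
      (fun v => φ (v, a v)) ∈ NF.sols Γ I := by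
  have key : ∀ (f : F) (x : Fin (ar f) → B), ∃ y : B, ∀ (args : Fin (ar f) → V) (j : V),
      (⟨f, (args, j)⟩ : (f : F) × ((Fin (ar f) → V) × V)) ∈ Γ.eqs →
      ∀ b : V → A, (x = fun i => φ (args i, b (args i))) →
        y = φ (j, g j fun u => b u.1) := by
    intro f x
    by_cases h : ∃ (args : Fin (ar f) → V) (j : V) (b : V → A),
        (⟨f, (args, j)⟩ : (f : F) × ((Fin (ar f) → V) × V)) ∈ Γ.eqs ∧
          x = fun i => φ (args i, b (args i))
    · obtain ⟨args, j, b, he, rfl⟩ := h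
      refine ⟨φ (j, g j fun u => b u.1), fun args' j' he' b' hx => ?_⟩
      have hx' : ∀ i, args i = args' i ∧ b (args i) = b' (args' i) := fun i => by
        simpa using congrFun hx i
      obtain rfl : args = args' := funext fun i => (hx' i).1
      obtain rfl : j = j' := hnc f args j j' he he'
      have hb : (fun u : {u : V // NF.DepE Γ u j} => b u.1) = fun u => b' u.1 := by
        funext ⟨u, e, hmem, ⟨i, hi⟩, hj⟩
        -- the equation witnessing the edge `u → j` is the one at hand
        obtain rfl : e = ⟨f, (args, j)⟩ := hfnf e hmem _ he hj
        subst hi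
        exact (hx' i).2
      rw [hb]
    · exact ⟨Classical.arbitrary B, fun args j he b hx => absurd ⟨args, j, b, he, hx⟩ h⟩
  choose I hI using key
  refine ⟨I, fun a ha e he => ?_⟩
  rw [hI e.1 _ e.2.1 e.2.2 he a rfl, ← ha e.2.2 fun hs => hs e he rfl]

theorem ncard_le_card [Finite V] {n : ℕ} (s : Set (V → Fin n)) :
    s.ncard ≤ Nat.card (V → Fin n) := by
  rw [← Set.ncard_univ]
  exact Set.ncard_le_ncard (Set.subset_univ s)

end Helpers

/-- **Guessing-number sandwich theorem, unlabelled functional form.**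
Let `Γ` be a Term Coding instance, let `Γnf` be a normal-form instance with the
Term-DAG/no-collision property equivalent to `Γ` (i.e. `S_n(Γnf) = S_n(Γ)` for all `n`),
assume `Γnf` is in functional normal form, let `k` be the number of variables of `Γnf`,
let `G_Γ` be its dependency digraph, and let `S = Src(Γnf)`.  Then for every `n ≥ k`,
`W_{⌊n/k⌋}(G_Γ, S) ≤ S_n(Γ) ≤ W_n(G_Γ, S)`. -/
theorem sandwich_unlabelled {F : Type} {ar : F → ℕ} {V : Type} [Fintype V]
    {F' : Type} {ar' : F' → ℕ} {V' : Type} [Fintype V'] [Nonempty V']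
    (Γ : TC.Instance F ar V) (Γnf : NF.Inst F' ar' V')
    (heqv : ∀ n : ℕ, NF.Sn Γnf n = TC.Sn Γ n)
    (hnc : NF.NoCollision Γnf) (hfnf : NF.FNF Γnf)
    (n : ℕ) (hn : Fintype.card V' ≤ n) :
    GG.W (NF.DepE Γnf) (NF.Src Γnf) (n / Fintype.card V') ≤ TC.Sn Γ n ∧
    TC.Sn Γ n ≤ GG.W (NF.DepE Γnf) (NF.Src Γnf) n := by
  rw [← heqv n]
  have hk : 0 < Fintype.card V' := Fintype.card_pos
  have : Nonempty (Fin n) := ⟨⟨0, by omega⟩⟩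
  constructor
  · -- `k * ⌊n/k⌋ ≤ n`, so `V' × Fin ⌊n/k⌋` embeds into the alphabet
    obtain ⟨φ⟩ : Nonempty (V' × Fin (n / Fintype.card V') ↪ Fin n) := by
      apply Function.Embedding.nonempty_of_card_le
      simpa using Nat.mul_div_le n (Fintype.card V')
    apply csSup_le'
    rintro _ ⟨g, rfl⟩
    obtain ⟨I, hI⟩ := exists_interp Γnf hnc hfnf φ g
    refine le_trans ?_ (le_csSup ⟨Nat.card (V' → Fin n), ?_⟩ ⟨I, rfl⟩)
    · refine Set.ncard_le_ncard_of_injOn (fun a v => φ (v, a v)) hI ?_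
      intro a _ a' _ h
      funext v
      simpa using congrFun h v
    · rintro _ ⟨J, rfl⟩
      exact ncard_le_card _
  · apply csSup_le'
    rintro _ ⟨I, rfl⟩
    obtain ⟨g, hg⟩ := exists_strategy Γnf I
    refine le_trans (Set.ncard_le_ncard hg) (le_csSup ⟨Nat.card (V' → Fin n), ?_⟩ ⟨g, rfl⟩)
    rintro _ ⟨g', rfl⟩
    exact ncard_le_card _
end
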